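/- In the differential algebra Ω, define the Cartan–Maurer 1-forms w_x = x⁻¹·dx, w_y = x⁻¹·dy, and w_θ = x·dθ − θ·dx. Then the following nine commutation relations hold in Ω: x·w_x = q w_x·x, x·w_y = q² w_y·x, x·w_θ = q w_θ·x, y·w_x = q² w_x·y + (q−1) w_y·x, y·w_y = q w_y·y, y·w_θ = w_θ·y, θ·w_x = q² w_x·θ, θ·w_y = q w_y·θ, θ·w_θ = q w_θ·θ. -/

import Mathlib

/-!
`Ω`: the differential algebra of the Z₃-graded quantum superspace, the unital
associative ℂ-algebra with generators `x`, `x⁻¹`, `y`, `θ`, `dx`, `dy`, `dθ`,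
quotient of the free algebra by the two-sided ideal generated by the relations
`x·x⁻¹ = 1 = x⁻¹·x`;  `xy = q·yx`, `xθ = q·θx`, `yθ = q²·θy`, `y³ = 0`, `θ³ = 0`;
`x·dx = q·dx·x`, `x·dy = q²·dy·x`, `x·dθ = q·dθ·x + (q−1)·dx·θ`, `y·dy = dy·y`,
`y·dx = q·dx·y + (1−q²)·dy·x`, `y·dθ = q·dθ·y + (1−q²)·dy·θ`, `θ·dx = q·dx·θ`,
`θ·dy = dy·θ`, `θ·dθ = q²·dθ·θ`;  `dx·dy = q²·dy·dx`, `dx·dθ = dθ·dx`,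
`dy·dθ = dθ·dy`;  `(dx)³ = 0`, `(dy)³ = 0`.
-/

noncomputable section

inductive Gen : Type
  | x | xinv | y | th | dx | dy | dth

abbrev FA : Type := FreeAlgebra ℂ Gen

def Xf : FA := FreeAlgebra.ι ℂ Gen.x
def XIf : FA := FreeAlgebra.ι ℂ Gen.xinv
def Yf : FA := FreeAlgebra.ι ℂ Gen.y
def Tf : FA := FreeAlgebra.ι ℂ Gen.th
def DXf : FA := FreeAlgebra.ι ℂ Gen.dx
def DYf : FA := FreeAlgebra.ι ℂ Gen.dy
def DTf : FA := FreeAlgebra.ι ℂ Gen.dth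

/-- The defining relations of the differential algebra `Ω`. -/
inductive QRel (q : ℂ) : FA → FA → Prop
  | xxi : QRel q (Xf * XIf) 1
  | xix : QRel q (XIf * Xf) 1
  | xy : QRel q (Xf * Yf) (q • (Yf * Xf))
  | xth : QRel q (Xf * Tf) (q • (Tf * Xf))
  | yth : QRel q (Yf * Tf) ((q ^ 2) • (Tf * Yf))
  | ycube : QRel q (Yf ^ 3) 0
  | thcube : QRel q (Tf ^ 3) 0
  | xdx : QRel q (Xf * DXf) (q • (DXf * Xf))
  | xdy : QRel q (Xf * DYf) ((q ^ 2) • (DYf * Xf))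
  | xdth : QRel q (Xf * DTf) (q • (DTf * Xf) + (q - 1) • (DXf * Tf))
  | ydy : QRel q (Yf * DYf) (DYf * Yf)
  | ydx : QRel q (Yf * DXf) (q • (DXf * Yf) + (1 - q ^ 2) • (DYf * Xf))
  | ydth : QRel q (Yf * DTf) (q • (DTf * Yf) + (1 - q ^ 2) • (DYf * Tf))
  | thdx : QRel q (Tf * DXf) (q • (DXf * Tf))
  | thdy : QRel q (Tf * DYf) (DYf * Tf)
  | thdth : QRel q (Tf * DTf) ((q ^ 2) • (DTf * Tf))
  | dxdy : QRel q (DXf * DYf) ((q ^ 2) • (DYf * DXf))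
  | dxdth : QRel q (DXf * DTf) (DTf * DXf)
  | dydth : QRel q (DYf * DTf) (DTf * DYf)
  | dxcube : QRel q (DXf ^ 3) 0
  | dycube : QRel q (DYf ^ 3) 0

/-- The differential algebra `Ω` of the Z₃-graded quantum superspace. -/
abbrev Om (q : ℂ) : Type := RingQuot (QRel q)

def Xg (q : ℂ) : Om q := RingQuot.mkAlgHom ℂ (QRel q) Xf
def XIg (q : ℂ) : Om q := RingQuot.mkAlgHom ℂ (QRel q) XIf
def Yg (q : ℂ) : Om q := RingQuot.mkAlgHom ℂ (QRel q) Yf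
def Tg (q : ℂ) : Om q := RingQuot.mkAlgHom ℂ (QRel q) Tf
def DXg (q : ℂ) : Om q := RingQuot.mkAlgHom ℂ (QRel q) DXf
def DYg (q : ℂ) : Om q := RingQuot.mkAlgHom ℂ (QRel q) DYf
def DTg (q : ℂ) : Om q := RingQuot.mkAlgHom ℂ (QRel q) DTf

/-!
Most of the relations defining `Ω` say that two elements commute up to a scalar, and such scalars
multiply along products, so six of the nine relations are read off factor by factor. For the other
three, `w_θ` also equals `q·dθ·x − dx·θ`, which gives `x·w_θ`, while moving `y` past `dx` or `dθ`
produces an extra multiple of `dy`: in `y·w_x` this is the term in `w_y·x`, and in `y·w_θ` the two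
contributions cancel because `x·dy·θ = θ·dy·x`.
-/

/-- Commutation up to a scalar: `a b = c b a`. The scalar belongs to the order `a b`; the opposite
order carries an inverse of `c`. -/
def QCommute {K A : Type*} [CommSemiring K] [Semiring A] [Algebra K A] (c : K) (a b : A) : Prop :=
  a * b = c • (b * a)

namespace QCommute

section Semiring

variable {K A : Type*} [CommSemiring K] [Semiring A] [Algebra K A] {c d : K} {a b b' : A}

theorem of_commute (h : Commute a b) : QCommute (1 : K) a b :=
  h.eq.trans (one_smul K _).symm

theorem symm (h : QCommute c a b) (hdc : d * c = 1) : QCommute d b a := by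
  rw [QCommute, h, smul_smul, hdc, one_smul]

theorem mul_right (h : QCommute c a b) (h' : QCommute d a b') : QCommute (c * d) a (b * b') :=
  calc a * (b * b') = c • (b * (a * b')) := by rw [← mul_assoc, h, smul_mul_assoc, mul_assoc]
    _ = (c * d) • (b * b' * a) := by rw [h', mul_smul_comm, smul_smul, mul_assoc]

theorem units_inv {u : Aˣ} (h : QCommute c (u : A) a) : QCommute c a (↑u⁻¹ : A) :=
  calc a * ↑u⁻¹ = ↑u⁻¹ * (u * a) * ↑u⁻¹ := by rw [Units.inv_mul_cancel_left]
    _ = c • (↑u⁻¹ * a) := by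
      rw [h, mul_smul_comm, smul_mul_assoc, ← mul_assoc, Units.mul_inv_cancel_right]

end Semiring

theorem sub_right {K A : Type*} [CommSemiring K] [Ring A] [Algebra K A] {c : K} {a b b' : A}
    (h : QCommute c a b) (h' : QCommute c a b') : QCommute c a (b - b') := by
  rw [QCommute, mul_sub, h, h', sub_mul, smul_sub]

end QCommute

/-- Elements of a `K`-algebra `A` subject to the relations of the differential calculus on the
`Z₃`-graded quantum superspace between two coordinates and between a coordinate and a differential.
Nilpotency and the relations between two differentials are not imposed, and `q` is an arbitrary
scalar; `x⁻¹` is encoded by taking `x` to be a unit. -/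
structure CoordinateCalculus {K : Type*} [CommRing K] (q : K) (A : Type*) [Ring A]
    [Algebra K A] where
  x : Aˣ
  (y θ dx dy dθ : A)
  qCommute_x_y : QCommute q (x : A) y
  qCommute_x_θ : QCommute q (x : A) θ
  qCommute_y_θ : QCommute (q ^ 2) y θ
  qCommute_x_dx : QCommute q (x : A) dx
  qCommute_x_dy : QCommute (q ^ 2) (x : A) dy
  x_mul_dθ : x * dθ = q • (dθ * x) + (q - 1) • (dx * θ)
  commute_y_dy : Commute y dy
  y_mul_dx : y * dx = q • (dx * y) + (1 - q ^ 2) • (dy * x)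
  y_mul_dθ : y * dθ = q • (dθ * y) + (1 - q ^ 2) • (dy * θ)
  qCommute_θ_dx : QCommute q θ dx
  commute_θ_dy : Commute θ dy
  qCommute_θ_dθ : QCommute (q ^ 2) θ dθ

namespace CoordinateCalculus

variable {K A : Type*} [CommRing K] [Ring A] [Algebra K A] {q : K} (C : CoordinateCalculus q A)

/-- The Cartan–Maurer form `w_x = x⁻¹·dx`. -/
def wx : A := ↑C.x⁻¹ * C.dx

/-- The Cartan–Maurer form `w_y = x⁻¹·dy`. -/
def wy : A := ↑C.x⁻¹ * C.dy

/-- The Cartan–Maurer form `w_θ = x·dθ − θ·dx`. -/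
def wθ : A := C.x * C.dθ - C.θ * C.dx

theorem qCommute_x_xinv : QCommute (1 : K) (C.x : A) ↑C.x⁻¹ :=
  .of_commute (Commute.refl (C.x : A)).units_inv_right

theorem qCommute_y_xinv : QCommute q C.y ↑C.x⁻¹ :=
  C.qCommute_x_y.units_inv

theorem qCommute_θ_xinv : QCommute q C.θ ↑C.x⁻¹ :=
  C.qCommute_x_θ.units_inv

theorem qCommute_x_wx : QCommute q (C.x : A) C.wx := by
  simpa only [wx, one_mul] using C.qCommute_x_xinv.mul_right C.qCommute_x_dx

theorem qCommute_x_wy : QCommute (q ^ 2) (C.x : A) C.wy := by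
  simpa only [wy, one_mul] using C.qCommute_x_xinv.mul_right C.qCommute_x_dy

theorem wθ_eq_smul_sub : C.wθ = q • (C.dθ * C.x) - C.dx * C.θ := by
  rw [wθ, C.x_mul_dθ, C.qCommute_θ_dx, sub_smul, one_smul]
  abel

theorem qCommute_x_wθ : QCommute q (C.x : A) C.wθ := by
  have x_dx_θ : QCommute (q * q) (C.x : A) (C.dx * C.θ) :=
    C.qCommute_x_dx.mul_right C.qCommute_x_θ
  calc C.x * C.wθ = q • (C.x * C.dθ * C.x) - (q * q) • (C.dx * C.θ * C.x) := by
        rw [wθ_eq_smul_sub, mul_sub, x_dx_θ, mul_smul_comm, mul_assoc (C.x : A)]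
    _ = q • (C.x * C.dθ * C.x) - q • (C.θ * C.dx * C.x) := by
        rw [C.qCommute_θ_dx, smul_mul_assoc, smul_smul]
    _ = q • (C.wθ * C.x) := by rw [wθ, sub_mul, smul_sub]

theorem y_mul_wx (hq : q ^ 3 = 1) :
    C.y * C.wx = q ^ 2 • (C.wx * C.y) + (q - 1) • (C.wy * C.x) :=
  calc C.y * C.wx = q • (↑C.x⁻¹ * (C.y * C.dx)) := by
        rw [wx, ← mul_assoc, C.qCommute_y_xinv, smul_mul_assoc, mul_assoc]
    _ = q ^ 2 • (C.wx * C.y) + (q - q ^ 3) • (C.wy * C.x) := by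
        simp only [C.y_mul_dx, wx, wy, mul_add, mul_smul_comm, mul_assoc]
        module
    _ = q ^ 2 • (C.wx * C.y) + (q - 1) • (C.wy * C.x) := by rw [hq]

theorem qCommute_y_wy : QCommute q C.y C.wy := by
  simpa only [wy, mul_one] using C.qCommute_y_xinv.mul_right (.of_commute C.commute_y_dy)

theorem x_mul_dy_mul_θ (hq : q ^ 3 = 1) : C.x * (C.dy * C.θ) = C.θ * (C.dy * C.x) :=
  calc C.x * (C.dy * C.θ) = (q ^ 2 * q) • (C.dy * C.θ * C.x) :=
        C.qCommute_x_dy.mul_right C.qCommute_x_θ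
    _ = C.θ * (C.dy * C.x) := by
        rw [← pow_succ, hq, one_smul, ← C.commute_θ_dy.eq, mul_assoc]

theorem commute_y_wθ (hq : q ^ 3 = 1) : Commute C.y C.wθ := by
  have y_x : QCommute (q ^ 2) C.y (C.x : A) := C.qCommute_x_y.symm (by rw [← pow_succ, hq])
  calc C.y * C.wθ = q ^ 2 • (C.x * (C.y * C.dθ) - C.θ * (C.y * C.dx)) := by
        rw [wθ, mul_sub, ← mul_assoc, ← mul_assoc, y_x, C.qCommute_y_θ, smul_mul_assoc,
          smul_mul_assoc, mul_assoc, mul_assoc, smul_sub]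
    _ = q ^ 3 • (C.wθ * C.y)
          + (q ^ 2 * (1 - q ^ 2)) • (C.x * (C.dy * C.θ) - C.θ * (C.dy * C.x)) := by
        simp only [C.y_mul_dθ, C.y_mul_dx, wθ, mul_add, sub_mul, mul_smul_comm, mul_assoc]
        module
    _ = C.wθ * C.y := by
        rw [hq, one_smul, C.x_mul_dy_mul_θ hq, sub_self, smul_zero, add_zero]

theorem qCommute_θ_wx : QCommute (q ^ 2) C.θ C.wx := by
  simpa only [wx, ← sq] using C.qCommute_θ_xinv.mul_right C.qCommute_θ_dx

theorem qCommute_θ_wy : QCommute q C.θ C.wy := by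
  simpa only [wy, mul_one] using C.qCommute_θ_xinv.mul_right (.of_commute C.commute_θ_dy)

theorem qCommute_θ_wθ (hq : q ^ 3 = 1) : QCommute q C.θ C.wθ := by
  have θ_x : QCommute (q ^ 2) C.θ (C.x : A) := C.qCommute_x_θ.symm (by rw [← pow_succ, hq])
  have θ_x_dθ : QCommute q C.θ (C.x * C.dθ) := by
    have q_pow_four : q ^ 2 * q ^ 2 = q := by linear_combination q * hq
    simpa only [q_pow_four] using θ_x.mul_right C.qCommute_θ_dθ
  have θ_θ_dx : QCommute q C.θ (C.θ * C.dx) := by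
    simpa only [one_mul] using (QCommute.of_commute (.refl C.θ)).mul_right C.qCommute_θ_dx
  exact θ_x_dθ.sub_right θ_θ_dx

end CoordinateCalculus

theorem cartan_maurer_coordinate_relations_general {K A : Type*} [CommRing K] [Ring A]
    [Algebra K A] {q : K} (hq : q ^ 3 = 1) (C : CoordinateCalculus q A) :
    C.x * C.wx = q • (C.wx * C.x) ∧
    C.x * C.wy = q ^ 2 • (C.wy * C.x) ∧
    C.x * C.wθ = q • (C.wθ * C.x) ∧
    C.y * C.wx = q ^ 2 • (C.wx * C.y) + (q - 1) • (C.wy * C.x) ∧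
    C.y * C.wy = q • (C.wy * C.y) ∧
    C.y * C.wθ = C.wθ * C.y ∧
    C.θ * C.wx = q ^ 2 • (C.wx * C.θ) ∧
    C.θ * C.wy = q • (C.wy * C.θ) ∧
    C.θ * C.wθ = q • (C.wθ * C.θ) :=
  ⟨C.qCommute_x_wx, C.qCommute_x_wy, C.qCommute_x_wθ, C.y_mul_wx hq, C.qCommute_y_wy,
    C.commute_y_wθ hq, C.qCommute_θ_wx, C.qCommute_θ_wy, C.qCommute_θ_wθ hq⟩

section Presentation

variable {K B : Type*} [CommSemiring K] [Semiring B] [Algebra K B] {R : B → B → Prop}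
  {a b d e : B} {r s : K}

theorem mkAlgHom_mul_eq_one (h : R (a * b) 1) :
    RingQuot.mkAlgHom K R a * RingQuot.mkAlgHom K R b = 1 := by
  simpa only [map_mul, map_one] using RingQuot.mkAlgHom_rel K h

theorem commute_mkAlgHom (h : R (a * b) (b * a)) :
    Commute (RingQuot.mkAlgHom K R a) (RingQuot.mkAlgHom K R b) := by
  simpa only [commute_iff_eq, map_mul] using RingQuot.mkAlgHom_rel K h

theorem qCommute_mkAlgHom (h : R (a * b) (r • (b * a))) :
    QCommute r (RingQuot.mkAlgHom K R a) (RingQuot.mkAlgHom K R b) := by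
  simpa only [QCommute, map_mul, map_smul] using RingQuot.mkAlgHom_rel K h

theorem mkAlgHom_mul_eq_smul_add_smul (h : R (a * b) (r • (b * a) + s • (d * e))) :
    RingQuot.mkAlgHom K R a * RingQuot.mkAlgHom K R b =
      r • (RingQuot.mkAlgHom K R b * RingQuot.mkAlgHom K R a) +
        s • (RingQuot.mkAlgHom K R d * RingQuot.mkAlgHom K R e) := by
  simpa only [map_add, map_mul, map_smul] using RingQuot.mkAlgHom_rel K h

end Presentation

/-- The calculus formed by the generators of `Ω`, through which the relations of an arbitrary
`CoordinateCalculus` specialize to `Ω`. -/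
def omCalculus (q : ℂ) : CoordinateCalculus q (Om q) where
  x := ⟨Xg q, XIg q, mkAlgHom_mul_eq_one QRel.xxi, mkAlgHom_mul_eq_one QRel.xix⟩
  y := Yg q
  θ := Tg q
  dx := DXg q
  dy := DYg q
  dθ := DTg q
  qCommute_x_y := qCommute_mkAlgHom .xy
  qCommute_x_θ := qCommute_mkAlgHom .xth
  qCommute_y_θ := qCommute_mkAlgHom .yth
  qCommute_x_dx := qCommute_mkAlgHom .xdx
  qCommute_x_dy := qCommute_mkAlgHom .xdy
  x_mul_dθ := mkAlgHom_mul_eq_smul_add_smul .xdth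
  commute_y_dy := commute_mkAlgHom .ydy
  y_mul_dx := mkAlgHom_mul_eq_smul_add_smul .ydx
  y_mul_dθ := mkAlgHom_mul_eq_smul_add_smul .ydth
  qCommute_θ_dx := qCommute_mkAlgHom .thdx
  commute_θ_dy := commute_mkAlgHom .thdy
  qCommute_θ_dθ := qCommute_mkAlgHom .thdth

/-- The commutation relations of the Cartan–Maurer 1-forms
`w_x = x⁻¹·dx`, `w_y = x⁻¹·dy`, `w_θ = x·dθ − θ·dx` with the generators of the
algebra: `x·w_x = q·w_x·x`, `x·w_y = q²·w_y·x`, `x·w_θ = q·w_θ·x`,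
`y·w_x = q²·w_x·y + (q−1)·w_y·x`, `y·w_y = q·w_y·y`, `y·w_θ = w_θ·y`,
`θ·w_x = q²·w_x·θ`, `θ·w_y = q·w_y·θ`, `θ·w_θ = q·w_θ·θ`. -/
theorem cartan_maurer_coordinate_relations (q : ℂ) (hq3 : q ^ 3 = 1) (hq1 : q ≠ 1)
    (wx wy wth : Om q)
    (hwx : wx = XIg q * DXg q)
    (hwy : wy = XIg q * DYg q)
    (hwth : wth = Xg q * DTg q - Tg q * DXg q) :
    Xg q * wx = q • (wx * Xg q) ∧
    Xg q * wy = (q ^ 2) • (wy * Xg q) ∧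
    Xg q * wth = q • (wth * Xg q) ∧
    Yg q * wx = (q ^ 2) • (wx * Yg q) + (q - 1) • (wy * Xg q) ∧
    Yg q * wy = q • (wy * Yg q) ∧
    Yg q * wth = wth * Yg q ∧
    Tg q * wx = (q ^ 2) • (wx * Tg q) ∧
    Tg q * wy = q • (wy * Tg q) ∧
    Tg q * wth = q • (wth * Tg q) := by
  subst hwx hwy hwth
  exact cartan_maurer_coordinate_relations_general hq3 (omCalculus q)
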